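/- arXiv:1108.2464 — 2 statements merged into one kernel-verified Lean document; each statement's English description precedes it below -/
import Mathlib

section
/- Fix p, q ∈ [1, ∞) and let K > 0 be any constant for which the Grothendieck inequality holds, i.e., for every m, n, every m × n real matrix A, every d ∈ ℕ, and all unit vectors x_1,…,x_m, y_1,…,y_n ∈ ℝ^d one has ∑_{i,j} a_{ij}⟨x_i,y_j⟩ ≤ K · max over signs ε ∈ {−1,1}^m, δ ∈ {−1,1}^n of ∑_{i,j} a_{ij} ε_i δ_j. Then for every m × n real matrix A = (a_{ij}) and all vectors x_1, …, x_m, y_1, …, y_n ∈ ℝ^{m+n} satisfying ∑_{i=1}^m ‖x_i‖₂^p ≤ 1 and ∑_{j=1}^n ‖y_j‖₂^q ≤ 1, one has ∑_{i=1}^m ∑_{j=1}^n a_{ij} ⟨x_i, y_j⟩ ≤ K · max{∑_{i=1}^m ∑_{j=1}^n a_{ij} s_i t_j : s ∈ ℝ^m, t ∈ ℝⁿ, ∑_i |s_i|^p ≤ 1, ∑_j |t_j|^q ≤ 1}. -/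
/-!
Write `x i = ‖x i‖ • u i` and `y j = ‖y j‖ • v j` with unit vectors `u i`, `v j`, and apply the
Grothendieck inequality to the matrix `A i j * ‖x i‖ * ‖y j‖`. Optimal signs `ε`, `δ` for this
matrix give the scalars `s i = ‖x i‖ * ε i` and `t j = ‖y j‖ * δ j`, which inherit the `ℓ_p` and
`ℓ_q` constraints because `|s i| = ‖x i‖` and `|t j| = ‖y j‖`. Passing from `ℝ^d` to an
arbitrary real inner product space is harmless because finitely many vectors span a
finite-dimensional subspace.
-/

section SignVectors

variable {ι κ : Type*}

/-- A vector of signs, that is, an element of `{-1, 1}^ι`, encoded as a real-valued function so that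
it can be used directly as a vector of scalars. -/
def IsSignVector (ε : ι → ℝ) : Prop :=
  ∀ i, ε i = 1 ∨ ε i = -1

theorem IsSignVector.abs_eq_one {ε : ι → ℝ} (hε : IsSignVector ε) (i : ι) : |ε i| = 1 :=
  (abs_eq zero_le_one).2 (hε i)

theorem IsSignVector.sum_abs_norm_mul_rpow {E : Type*} [Fintype ι] [SeminormedAddGroup E]
    {ε : ι → ℝ} (hε : IsSignVector ε) (x : ι → E) (p : ℝ) :
    ∑ i, |‖x i‖ * ε i| ^ p = ∑ i, ‖x i‖ ^ p := by
  simp only [abs_mul, abs_norm, hε.abs_eq_one, mul_one]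

theorem isSignVector_one : IsSignVector (1 : ι → ℝ) :=
  fun _ ↦ Or.inl rfl

theorem finite_setOf_isSignVector [Finite ι] : {ε : ι → ℝ | IsSignVector ε}.Finite :=
  Set.Finite.pi' (t := fun _ ↦ {1, -1}) fun _ ↦ Set.toFinite _

variable [Fintype ι] [Fintype κ]

/-- The values of the bilinear form of `A` at pairs of sign vectors. The supremum of this finite
nonempty set is the maximum on the right-hand side of the Grothendieck inequality. -/
def signValues (A : Matrix ι κ ℝ) : Set ℝ :=
  {s | ∃ ε δ, IsSignVector ε ∧ IsSignVector δ ∧ s = ∑ i, ∑ j, A i j * ε i * δ j}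

theorem sum_mem_signValues (A : Matrix ι κ ℝ) : ∑ i, ∑ j, A i j ∈ signValues A :=
  ⟨1, 1, isSignVector_one, isSignVector_one, by simp⟩

theorem finite_signValues (A : Matrix ι κ ℝ) : (signValues A).Finite := by
  refine (Set.Finite.image2 (fun ε δ ↦ ∑ i, ∑ j, A i j * ε i * δ j)
    finite_setOf_isSignVector finite_setOf_isSignVector).subset ?_
  rintro _ ⟨ε, δ, hε, hδ, rfl⟩
  exact Set.mem_image2_of_mem hε hδ

theorem sSup_signValues_mem (A : Matrix ι κ ℝ) : sSup (signValues A) ∈ signValues A :=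
  Set.Nonempty.csSup_mem ⟨_, sum_mem_signValues A⟩ (finite_signValues A)

end SignVectors

section LpBall

variable {ι κ : Type*} [Fintype ι] [Fintype κ]

theorem abs_le_one_of_sum_abs_rpow_le_one {p : ℝ} (hp : 0 < p) {s : ι → ℝ}
    (hs : ∑ i, |s i| ^ p ≤ 1) (i : ι) : |s i| ≤ 1 := by
  have hi : |s i| ^ p ≤ ∑ k, |s k| ^ p :=
    Finset.single_le_sum (f := fun k ↦ |s k| ^ p) (fun _ _ ↦ by positivity) (Finset.mem_univ i)
  have h_one : |s i| ^ p ≤ 1 ^ p := (hi.trans hs).trans_eq (Real.one_rpow p).symm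
  exact (Real.rpow_le_rpow_iff (abs_nonneg _) zero_le_one hp).1 h_one

theorem sum_mul_mul_le_sum_abs (A : Matrix ι κ ℝ) {s : ι → ℝ} {t : κ → ℝ}
    (hs : ∀ i, |s i| ≤ 1) (ht : ∀ j, |t j| ≤ 1) :
    ∑ i, ∑ j, A i j * s i * t j ≤ ∑ i, ∑ j, |A i j| := by
  gcongr with i _ j _
  calc A i j * s i * t j ≤ |A i j * s i * t j| := le_abs_self _
    _ = |A i j| * (|s i| * |t j|) := by rw [abs_mul, abs_mul, mul_assoc]
    _ ≤ |A i j| := mul_le_of_le_one_right (abs_nonneg _)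
      (mul_le_one₀ (hs i) (abs_nonneg _) (ht j))

theorem bddAbove_bilinear_lp {p q : ℝ} (hp : 0 < p) (hq : 0 < q) (A : Matrix ι κ ℝ) :
    BddAbove {r : ℝ | ∃ (s : ι → ℝ) (t : κ → ℝ),
      ∑ i, |s i| ^ p ≤ 1 ∧ ∑ j, |t j| ^ q ≤ 1 ∧ r = ∑ i, ∑ j, A i j * s i * t j} := by
  refine ⟨∑ i, ∑ j, |A i j|, ?_⟩
  rintro _ ⟨s, t, hs, ht, rfl⟩
  exact sum_mul_mul_le_sum_abs A (abs_le_one_of_sum_abs_rpow_le_one hp hs)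
    (abs_le_one_of_sum_abs_rpow_le_one hq ht)

end LpBall

theorem exists_norm_eq_one_and_norm_smul_eq {E : Type*} [NormedAddCommGroup E] [NormedSpace ℝ E]
    [Nontrivial E] (x : E) : ∃ u : E, ‖u‖ = 1 ∧ ‖x‖ • u = x := by
  obtain rfl | hx := eq_or_ne x 0
  · obtain ⟨u, hu⟩ := exists_norm_eq E zero_le_one
    exact ⟨u, hu, by simp⟩
  · exact ⟨NormedSpace.normalize x, NormedSpace.norm_normalize hx,
      NormedSpace.norm_smul_normalize x⟩

theorem exists_euclideanSpace_inner_eq {ι E : Type*} [Finite ι] [NormedAddCommGroup E]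
    [InnerProductSpace ℝ E] (z : ι → E) :
    ∃ (d : ℕ) (w : ι → EuclideanSpace ℝ (Fin d)),
      ∀ i j, inner ℝ (w i) (w j) = inner ℝ (z i) (z j) := by
  let V := Submodule.span ℝ (Set.range z)
  have : FiniteDimensional ℝ V := FiniteDimensional.span_of_finite ℝ (Set.finite_range z)
  refine ⟨_, fun i ↦ (stdOrthonormalBasis ℝ V).repr ⟨z i, Submodule.subset_span ⟨i, rfl⟩⟩, ?_⟩
  intro i j
  rw [LinearIsometryEquiv.inner_map_map, Submodule.coe_inner]

/-- `K` is admissible in the Grothendieck inequality for all real matrices and all unit vectors of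
all the spaces `ℝ^d`. -/
def IsGrothendieckConstant (K : ℝ) : Prop :=
  ∀ (m n : ℕ) (A : Matrix (Fin m) (Fin n) ℝ) (d : ℕ)
    (x : Fin m → EuclideanSpace ℝ (Fin d)) (y : Fin n → EuclideanSpace ℝ (Fin d)),
    (∀ i, ‖x i‖ = 1) → (∀ j, ‖y j‖ = 1) →
    ∑ i, ∑ j, A i j * inner ℝ (x i) (y j) ≤ K * sSup (signValues A)

namespace IsGrothendieckConstant

variable {ι κ E : Type*} [Fintype ι] [Fintype κ] [NormedAddCommGroup E] [InnerProductSpace ℝ E]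
  {K : ℝ}

theorem pos (hK : IsGrothendieckConstant K) : 0 < K := by
  let A : Matrix (Fin 1) (Fin 1) ℝ := 1
  have h_sup : 0 ≤ sSup (signValues A) :=
    Real.sSup_nonneg' ⟨_, sum_mem_signValues A, by simp [A]⟩
  have h_one : 1 ≤ K * sSup (signValues A) := by
    simpa [A] using hK 1 1 A 1 (fun _ ↦ EuclideanSpace.single 0 1)
      (fun _ ↦ EuclideanSpace.single 0 1) (by simp) (by simp)
  exact pos_of_mul_pos_left (zero_lt_one.trans_le h_one) h_sup

theorem exists_isSignVector_of_norm_eq_one (hK : IsGrothendieckConstant K) (A : Matrix ι κ ℝ)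
    {x : ι → E} {y : κ → E} (hx : ∀ i, ‖x i‖ = 1) (hy : ∀ j, ‖y j‖ = 1) :
    ∃ ε δ, IsSignVector ε ∧ IsSignVector δ ∧
      ∑ i, ∑ j, A i j * inner ℝ (x i) (y j) ≤ K * ∑ i, ∑ j, A i j * ε i * δ j := by
  obtain ⟨d, w, hw⟩ := exists_euclideanSpace_inner_eq (Sum.elim x y)
  have hw_norm (k : ι ⊕ κ) : ‖w k‖ = 1 := by
    rw [norm_eq_sqrt_real_inner, hw, ← norm_eq_sqrt_real_inner]
    exact k.casesOn hx hy
  let e := Fintype.equivFin ι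
  let f := Fintype.equivFin κ
  let B := A.reindex e f
  obtain ⟨ε, δ, hε, hδ, hmax⟩ := sSup_signValues_mem B
  have hB := hK _ _ B d (w ∘ Sum.inl ∘ e.symm) (w ∘ Sum.inr ∘ f.symm)
    (fun _ ↦ hw_norm _) (fun _ ↦ hw_norm _)
  refine ⟨ε ∘ e, δ ∘ f, fun i ↦ hε (e i), fun j ↦ hδ (f j), ?_⟩
  rw [hmax, ← e.sum_comp, ← e.sum_comp] at hB
  simpa [B, ← f.sum_comp, hw] using hB

theorem exists_isSignVector (hK : IsGrothendieckConstant K) (A : Matrix ι κ ℝ)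
    (x : ι → E) (y : κ → E) :
    ∃ ε δ, IsSignVector ε ∧ IsSignVector δ ∧
      ∑ i, ∑ j, A i j * inner ℝ (x i) (y j) ≤
        K * ∑ i, ∑ j, A i j * (‖x i‖ * ε i) * (‖y j‖ * δ j) := by
  cases subsingleton_or_nontrivial E with
  | inl _ =>
    exact ⟨1, 1, isSignVector_one, isSignVector_one, by simp [Subsingleton.elim _ (0 : E)]⟩
  | inr _ =>
    choose u hu hxu using fun i ↦ exists_norm_eq_one_and_norm_smul_eq (x i)
    choose v hv hyv using fun j ↦ exists_norm_eq_one_and_norm_smul_eq (y j)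
    have h_inner (i : ι) (j : κ) : inner ℝ (x i) (y j) = ‖x i‖ * ‖y j‖ * inner ℝ (u i) (v j) := by
      conv_lhs => rw [← hxu i, ← hyv j, real_inner_smul_left, real_inner_smul_right, ← mul_assoc]
    obtain ⟨ε, δ, hε, hδ, h⟩ := hK.exists_isSignVector_of_norm_eq_one
      (fun i j ↦ A i j * (‖x i‖ * ‖y j‖)) hu hv
    refine ⟨ε, δ, hε, hδ, ?_⟩
    calc ∑ i, ∑ j, A i j * inner ℝ (x i) (y j)
        = ∑ i, ∑ j, A i j * (‖x i‖ * ‖y j‖) * inner ℝ (u i) (v j) := by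
          simp only [h_inner, mul_assoc]
      _ ≤ K * ∑ i, ∑ j, A i j * (‖x i‖ * ‖y j‖) * ε i * δ j := h
      _ = K * ∑ i, ∑ j, A i j * (‖x i‖ * ε i) * (‖y j‖ * δ j) := by
          congr! 3 with i _ j _; ring

end IsGrothendieckConstant

theorem bilinear_lp_grothendieck_general {ι κ E : Type*} [Fintype ι] [Fintype κ]
    [NormedAddCommGroup E] [InnerProductSpace ℝ E] {p q K : ℝ} (hp : 0 < p) (hq : 0 < q)
    (hK : IsGrothendieckConstant K) (A : Matrix ι κ ℝ) {x : ι → E} {y : κ → E}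
    (hx : ∑ i, ‖x i‖ ^ p ≤ 1) (hy : ∑ j, ‖y j‖ ^ q ≤ 1) :
    ∑ i, ∑ j, A i j * inner ℝ (x i) (y j) ≤
      K * sSup {r : ℝ | ∃ (s : ι → ℝ) (t : κ → ℝ),
        ∑ i, |s i| ^ p ≤ 1 ∧ ∑ j, |t j| ^ q ≤ 1 ∧ r = ∑ i, ∑ j, A i j * s i * t j} := by
  obtain ⟨ε, δ, hε, hδ, h⟩ := hK.exists_isSignVector A x y
  refine h.trans (mul_le_mul_of_nonneg_left ?_ hK.pos.le)
  exact le_csSup (bddAbove_bilinear_lp hp hq A) ⟨_, _, (hε.sum_abs_norm_mul_rpow x p).trans_le hx,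
    (hδ.sum_abs_norm_mul_rpow y q).trans_le hy, rfl⟩

/-- The bilinear `L_p`/`L_q` Grothendieck inequality: any constant `K > 0` for which the
classical Grothendieck inequality holds also works for vectors whose Euclidean norms
satisfy `ℓ_p` and `ℓ_q` constraints, with the right-hand side being the corresponding
scalar maximum (the `ℓ_p^m → ℓ_{q*}^n` operator norm of `A`). -/
theorem bilinear_lp_grothendieck (p q : ℝ) (hp : 1 ≤ p) (hq : 1 ≤ q)
    (K : ℝ) (hK : 0 < K)
    (hGro : ∀ (m n : ℕ) (A : Matrix (Fin m) (Fin n) ℝ) (d : ℕ)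
      (x : Fin m → EuclideanSpace ℝ (Fin d)) (y : Fin n → EuclideanSpace ℝ (Fin d)),
      (∀ i, ‖x i‖ = 1) → (∀ j, ‖y j‖ = 1) →
      ∑ i, ∑ j, A i j * (inner ℝ (x i) (y j) : ℝ) ≤
        K * sSup {s : ℝ | ∃ (ε : Fin m → ℝ) (δ : Fin n → ℝ),
          (∀ i, ε i = 1 ∨ ε i = -1) ∧ (∀ j, δ j = 1 ∨ δ j = -1) ∧
          s = ∑ i, ∑ j, A i j * ε i * δ j})
    (m n : ℕ) (A : Matrix (Fin m) (Fin n) ℝ)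
    (x : Fin m → EuclideanSpace ℝ (Fin (m + n)))
    (y : Fin n → EuclideanSpace ℝ (Fin (m + n)))
    (hx : ∑ i, ‖x i‖ ^ p ≤ 1) (hy : ∑ j, ‖y j‖ ^ q ≤ 1) :
    ∑ i, ∑ j, A i j * (inner ℝ (x i) (y j) : ℝ) ≤
      K * sSup {r : ℝ | ∃ (s : Fin m → ℝ) (t : Fin n → ℝ),
        (∑ i, |s i| ^ p) ≤ 1 ∧ (∑ j, |t j| ^ q) ≤ 1 ∧
        r = ∑ i, ∑ j, A i j * s i * t j} :=
  bilinear_lp_grothendieck_general (zero_lt_one.trans_le hp) (zero_lt_one.trans_le hq) hGro A hx hy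
end

section
/- For every n ∈ ℕ, every symmetric positive semidefinite n × n real matrix A = (a_{ij}), every d ∈ ℕ, and all unit vectors x_1, …, x_n ∈ ℝ^d, one has ∑_{i=1}^n ∑_{j=1}^n a_{ij} ⟨x_i, x_j⟩ ≤ (π/n) · (Γ((n+1)/2) / Γ(n/2))² · max over signs ε_1, …, ε_n ∈ {−1, 1} of ∑_{i=1}^n ∑_{j=1}^n a_{ij} ε_i ε_j. -/
/-! Let `g` be uniformly distributed on the unit sphere of an `m`-dimensional space containing unit
vectors `x i`, and put `s i = sign ⟪x i, g⟫`, `l i = c * ⟪x i, g⟫`. By rotation invariance both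
`𝔼 [s i * l j]` and `𝔼 [l i * l j]` are multiples of `⟪x i, x j⟫`, and they agree for
`c = m * 𝔼 |⟪e, g⟫|`, `e` any unit vector. Taking expectations in
`0 ≤ ∑ i, ∑ j, A i j * (s i - l i) * (s j - l j)` therefore bounds
`m * (𝔼 |⟪e, g⟫|) ^ 2 * ∑ i, ∑ j, A i j * ⟪x i, x j⟫` by the expectation of
`∑ i, ∑ j, A i j * s i * s j`, hence by the maximum over signs (Rietz's argument). Only the Gram
matrix of the `x i` matters, so `n` vectors may be taken in dimension `m = n`; the explicit value of
`𝔼 |⟪e, g⟫|` on the sphere then gives the constant, where a Gaussian `g` would give `π / 2`.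
-/

open Real

section RotationInvariant

open MeasureTheory
open scoped RealInnerProductSpace

variable {E : Type*} [NormedAddCommGroup E] [InnerProductSpace ℝ E] [MeasurableSpace E]

/-- A measure on a real inner product space is rotation invariant if every linear isometric
automorphism (reflections included) preserves it. -/
def RotationInvariant (μ : Measure E) : Prop :=
  ∀ R : E ≃ₗᵢ[ℝ] E, MeasurePreserving R μ μ

variable [BorelSpace E] {μ : Measure E}

theorem rotationInvariant_volume [FiniteDimensional ℝ E] :
    RotationInvariant (volume : Measure E) :=
  fun R => R.measurePreserving

theorem RotationInvariant.withDensity_norm (hμ : RotationInvariant μ) {ρ : ℝ → ENNReal}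
    (hρ : Measurable ρ) : RotationInvariant (μ.withDensity fun g => ρ ‖g‖) := by
  refine fun R => ⟨R.continuous.measurable, Measure.ext fun s hs => ?_⟩
  have hRs : MeasurableSet (R ⁻¹' s) := R.continuous.measurable hs
  rw [Measure.map_apply R.continuous.measurable hs, withDensity_apply _ hRs,
    withDensity_apply _ hs, ← (hμ R).setLIntegral_comp_preimage hs (by fun_prop)]
  simp only [R.norm_map]

theorem measurable_normalize [SecondCountableTopology E] :
    Measurable (NormedSpace.normalize : E → E) :=
  measurable_norm.inv.smul measurable_id

theorem RotationInvariant.map_normalize [SecondCountableTopology E] (hμ : RotationInvariant μ) :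
    RotationInvariant (μ.map NormedSpace.normalize) := by
  intro R
  have hR : Measurable R := R.continuous.measurable
  have hcomm : R ∘ NormedSpace.normalize = NormedSpace.normalize ∘ R := by
    ext g
    simp [NormedSpace.normalize]
  refine ⟨hR, ?_⟩
  rw [Measure.map_map hR measurable_normalize, hcomm,
    ← Measure.map_map measurable_normalize hR, (hμ R).map_eq]

theorem RotationInvariant.integral_comp {G : Type*} [NormedAddCommGroup G] [NormedSpace ℝ G]
    (hμ : RotationInvariant μ) (R : E ≃ₗᵢ[ℝ] E) (f : E → G) :
    ∫ g, f (R g) ∂μ = ∫ g, f g ∂μ :=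
  (hμ R).integral_comp R.toHomeomorph.measurableEmbedding f

theorem RotationInvariant.integral_comp_inner_norm_eq_of_norm_eq (hμ : RotationInvariant μ)
    {x y : E} (hxy : ‖x‖ = ‖y‖) (f : ℝ → ℝ → ℝ) :
    ∫ g, f ⟪x, g⟫ ‖g‖ ∂μ = ∫ g, f ⟪y, g⟫ ‖g‖ ∂μ := by
  set R := (ℝ ∙ (x - y))ᗮ.reflection
  have hRx : R x = y := Submodule.reflection_sub hxy
  have hinner (g : E) : ⟪y, R g⟫ = ⟪x, g⟫ := by rw [← hRx, R.inner_map_map]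
  simpa only [hinner, R.norm_map] using hμ.integral_comp R fun g => f ⟪y, g⟫ ‖g‖

-- The integral is fixed by the reflection in the line through `x`.
theorem RotationInvariant.integral_comp_inner_smul_mem_span (hμ : RotationInvariant μ)
    (x : E) (φ : ℝ → ℝ) : ∫ g, φ ⟪x, g⟫ • g ∂μ ∈ ℝ ∙ x := by
  set R := (ℝ ∙ x).reflection
  have hRx : R x = x := Submodule.reflection_mem_subspace_eq_self
    (Submodule.mem_span_singleton_self x)
  have hinner (g : E) : ⟪x, R g⟫ = ⟪x, g⟫ := by
    nth_rewrite 1 [← hRx]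
    exact R.inner_map_map x g
  rw [← Submodule.reflection_eq_self_iff]
  calc R (∫ g, φ ⟪x, g⟫ • g ∂μ)
      = ∫ g, φ ⟪x, R g⟫ • R g ∂μ := by
        rw [← R.coe_toContinuousLinearEquiv, ← R.toContinuousLinearEquiv.integral_comp_comm]
        simp only [R.coe_toContinuousLinearEquiv, hinner, map_smul]
    _ = ∫ g, φ ⟪x, g⟫ • g ∂μ := hμ.integral_comp R fun g => φ ⟪x, g⟫ • g

theorem RotationInvariant.integral_comp_inner_mul_inner [CompleteSpace E]
    (hμ : RotationInvariant μ) {x : E} (hx : ‖x‖ = 1) {φ : ℝ → ℝ}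
    (hφ : Integrable (fun g => φ ⟪x, g⟫ • g) μ) (y : E) :
    ∫ g, φ ⟪x, g⟫ * ⟪y, g⟫ ∂μ = (∫ g, φ ⟪x, g⟫ * ⟪x, g⟫ ∂μ) * ⟪x, y⟫ := by
  obtain ⟨c, hc⟩ := Submodule.mem_span_singleton.mp (hμ.integral_comp_inner_smul_mem_span x φ)
  have hinner (z : E) : ∫ g, φ ⟪x, g⟫ * ⟪z, g⟫ ∂μ = c * ⟪x, z⟫ := by
    rw [real_inner_comm, ← real_inner_smul_right, hc, ← integral_inner hφ]
    simp only [real_inner_smul_right]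
  rw [hinner y, hinner x, real_inner_self_eq_norm_sq, hx, one_pow, mul_one]

theorem RotationInvariant.finrank_mul_integral_inner_sq [FiniteDimensional ℝ E]
    (hμ : RotationInvariant μ) (hμ₂ : MemLp (fun g : E => g) 2 μ) {x : E} (hx : ‖x‖ = 1) :
    Module.finrank ℝ E * ∫ g, ⟪x, g⟫ ^ 2 ∂μ = ∫ g, ‖g‖ ^ 2 ∂μ := by
  set b := stdOrthonormalBasis ℝ E
  calc Module.finrank ℝ E * ∫ g, ⟪x, g⟫ ^ 2 ∂μ
      = ∑ i, ∫ g, ⟪b i, g⟫ ^ 2 ∂μ := by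
        rw [Finset.sum_congr rfl fun i _ => hμ.integral_comp_inner_norm_eq_of_norm_eq
          ((b.norm_eq_one i).trans hx.symm) fun t _ => t ^ 2]
        simp
    _ = ∫ g, ‖g‖ ^ 2 ∂μ := by
        rw [← integral_finsetSum _ fun i _ => (hμ₂.const_inner (b i)).integrable_sq]
        simp only [b.sum_sq_inner_right]

theorem RotationInvariant.finrank_mul_integral_inner_mul_inner [FiniteDimensional ℝ E]
    (hμ : RotationInvariant μ) (hμ₂ : MemLp (fun g : E => g) 2 μ) {x : E} (hx : ‖x‖ = 1) (y : E) :
    Module.finrank ℝ E * ∫ g, ⟪x, g⟫ * ⟪y, g⟫ ∂μ = (∫ g, ‖g‖ ^ 2 ∂μ) * ⟪x, y⟫ := by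
  have hint : Integrable (fun g => ⟪x, g⟫ • g) μ :=
    memLp_one_iff_integrable.mp (hμ₂.smul (hμ₂.const_inner x))
  rw [hμ.integral_comp_inner_mul_inner hx (φ := fun t => t) hint, ← mul_assoc,
    ← hμ.finrank_mul_integral_inner_sq hμ₂ hx]
  simp only [pow_two]

end RotationInvariant

section Sphere

open MeasureTheory Module
open scoped RealInnerProductSpace

variable (E : Type*) [NormedAddCommGroup E] [InnerProductSpace ℝ E] [FiniteDimensional ℝ E]
  [MeasurableSpace E] [BorelSpace E]

theorem integral_norm_pow_mul_exp_neg_norm_sq [Nontrivial E] (k : ℕ) :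
    ∫ g : E, ‖g‖ ^ k * exp (-‖g‖ ^ 2) =
      √π ^ finrank ℝ E * Gamma ((finrank ℝ E + k) / 2) / Gamma (finrank ℝ E / 2) := by
  have hfinrank : 0 < finrank ℝ E := finrank_pos
  have : 0 < Gamma ((finrank ℝ E : ℝ) / 2) := Gamma_pos_of_pos (by positivity)
  have hradial : ∫ r in Set.Ioi (0 : ℝ), r ^ (finrank ℝ E - 1) • (r ^ k * exp (-r ^ 2)) =
      1 / 2 * Gamma ((finrank ℝ E + k) / 2) := by
    convert integral_rpow_mul_exp_neg_rpow (p := 2) (q := ((finrank ℝ E - 1 + k : ℕ) : ℝ))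
      two_pos (neg_one_lt_zero.trans_le (Nat.cast_nonneg _)) using 3
    · rw [rpow_natCast, rpow_two, smul_eq_mul, pow_add, mul_assoc]
    · push_cast [Nat.cast_sub (Nat.one_le_of_lt hfinrank)]
      ring_nf
  rw [integral_fun_norm_addHaar volume fun r => r ^ k * exp (-r ^ 2), hradial, Measure.real,
    InnerProductSpace.volume_ball, ENNReal.ofReal_one, one_pow, one_mul,
    ENNReal.toReal_ofReal (by positivity), Gamma_add_one (by positivity), nsmul_eq_mul, smul_eq_mul]
  field_simp

theorem integral_abs_mul_exp_neg_sq : ∫ t : ℝ, |t| * exp (-t ^ 2) = 1 := by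
  have habs := integral_comp_abs (f := fun t => t * exp (-t ^ 2))
  have hGamma := integral_rpow_mul_exp_neg_rpow (p := 2) (q := 1) two_pos (by norm_num)
  simp only [rpow_one, rpow_two] at hGamma
  simp only [sq_abs] at habs
  rw [habs, hGamma]
  norm_num

theorem integral_abs_coord_mul_exp_neg_norm_sq {ι : Type*} [Fintype ι] (i : ι) :
    ∫ g : EuclideanSpace ℝ ι, |g i| * exp (-‖g‖ ^ 2) = √π ^ (Fintype.card ι - 1) := by
  classical
  have hgauss : ∫ t : ℝ, exp (-t ^ 2) = √π := by simpa using integral_gaussian 1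
  have hprod (v : ι → ℝ) :
      |WithLp.toLp 2 v i| * exp (-‖WithLp.toLp 2 v‖ ^ 2) =
        ∏ j, (if j = i then |v j| else 1) * exp (-v j ^ 2) := by
    rw [Finset.prod_mul_distrib, Finset.prod_ite_eq' Finset.univ i, if_pos (Finset.mem_univ i),
      ← exp_sum, EuclideanSpace.real_norm_sq_eq, Finset.sum_neg_distrib]
  calc ∫ g : EuclideanSpace ℝ ι, |g i| * exp (-‖g‖ ^ 2)
      = ∫ v : ι → ℝ, ∏ j, (if j = i then |v j| else 1) * exp (-v j ^ 2) := by
        simp only [← hprod]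
        exact ((PiLp.volume_preserving_toLp ι).integral_comp
          (MeasurableEquiv.toLp 2 (ι → ℝ)).measurableEmbedding _).symm
    _ = ∏ j, ∫ t : ℝ, (if j = i then |t| else 1) * exp (-t ^ 2) :=
        integral_fintype_prod_volume_eq_prod
          fun j t => (if j = i then |t| else 1) * exp (-t ^ 2)
    _ = ∏ _j ∈ Finset.univ.erase i, √π := by
        rw [← Finset.mul_prod_erase Finset.univ _ (Finset.mem_univ i)]
        simp only [if_true, integral_abs_mul_exp_neg_sq, one_mul]
        refine Finset.prod_congr rfl fun _ hj => ?_
        simp only [if_neg (Finset.ne_of_mem_erase hj), one_mul, hgauss]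
    _ = √π ^ (Fintype.card ι - 1) := by
        rw [Finset.prod_const, Finset.card_erase_of_mem (Finset.mem_univ i), Finset.card_univ]

variable {E} in
theorem integral_abs_inner_mul_exp_neg_norm_sq {x : E} (hx : ‖x‖ = 1) :
    ∫ g : E, |⟪x, g⟫| * exp (-‖g‖ ^ 2) = √π ^ (finrank ℝ E - 1) := by
  have : Nontrivial E := nontrivial_of_ne x 0 (norm_ne_zero_iff.mp (by simp [hx]))
  set b := stdOrthonormalBasis ℝ E
  set i : Fin (finrank ℝ E) := ⟨0, finrank_pos⟩
  calc ∫ g : E, |⟪x, g⟫| * exp (-‖g‖ ^ 2)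
      = ∫ g : E, |⟪b i, g⟫| * exp (-‖g‖ ^ 2) :=
        rotationInvariant_volume.integral_comp_inner_norm_eq_of_norm_eq
          (hx.trans (b.norm_eq_one i).symm) fun t r => |t| * exp (-r ^ 2)
    _ = ∫ g : E, |b.repr g i| * exp (-‖b.repr g‖ ^ 2) := by
        simp only [b.repr_apply_apply, b.repr.norm_map]
    _ = ∫ h : EuclideanSpace ℝ (Fin (finrank ℝ E)), |h i| * exp (-‖h‖ ^ 2) :=
        b.measurePreserving_repr.integral_comp b.repr.toHomeomorph.measurableEmbedding
          fun h => |h i| * exp (-‖h‖ ^ 2)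
    _ = √π ^ (finrank ℝ E - 1) := by
        rw [integral_abs_coord_mul_exp_neg_norm_sq, Fintype.card_fin]

/-- The rotation-invariant probability measure on the unit sphere of a nontrivial `E`, as a measure
on `E` (zero if `E` is trivial): the push-forward under `g ↦ g / ‖g‖` of the radial density
proportional to `‖g‖ exp (-‖g‖²)`. The factor `‖g‖` turns integrals of linear functions of the
direction into Gaussian integrals. -/
noncomputable def uniformSphereMeasure : Measure E :=
  ((volume : Measure E).withDensity fun g =>
    ENNReal.ofReal (‖g‖ * exp (-‖g‖ ^ 2) / ∫ h : E, ‖h‖ * exp (-‖h‖ ^ 2))).map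
      NormedSpace.normalize

instance isProbabilityMeasure_uniformSphereMeasure [Nontrivial E] :
    IsProbabilityMeasure (uniformSphereMeasure E) := by
  have hpos : 0 < ∫ g : E, ‖g‖ * exp (-‖g‖ ^ 2) := by
    have hfinrank : 0 < finrank ℝ E := finrank_pos
    have h := integral_norm_pow_mul_exp_neg_norm_sq E 1
    simp only [pow_one] at h
    rw [h]
    exact div_pos (mul_pos (by positivity) (Gamma_pos_of_pos (by positivity)))
      (Gamma_pos_of_pos (by positivity))
  have hint : Integrable fun g : E => ‖g‖ * exp (-‖g‖ ^ 2) / ∫ h : E, ‖h‖ * exp (-‖h‖ ^ 2) :=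
    (Integrable.of_integral_ne_zero hpos.ne').div_const _
  have hdensity : IsProbabilityMeasure ((volume : Measure E).withDensity fun g =>
      ENNReal.ofReal (‖g‖ * exp (-‖g‖ ^ 2) / ∫ h : E, ‖h‖ * exp (-‖h‖ ^ 2))) := by
    refine ⟨?_⟩
    rw [withDensity_apply _ MeasurableSet.univ, Measure.restrict_univ,
      ← ofReal_integral_eq_lintegral_ofReal hint (ae_of_all _ fun g => by positivity),
      integral_div, div_self hpos.ne', ENNReal.ofReal_one]
  exact Measure.isProbabilityMeasure_map measurable_normalize.aemeasurable

theorem rotationInvariant_uniformSphereMeasure : RotationInvariant (uniformSphereMeasure E) :=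
  (rotationInvariant_volume.withDensity_norm
    (ρ := fun r => ENNReal.ofReal (r * exp (-r ^ 2) / ∫ h : E, ‖h‖ * exp (-‖h‖ ^ 2)))
    (by fun_prop)).map_normalize

theorem norm_eq_one_ae_uniformSphereMeasure [Nontrivial E] :
    ∀ᵐ g ∂uniformSphereMeasure E, ‖g‖ = 1 := by
  have hne : ∀ᵐ g : E, g ≠ 0 := Measure.ae_ne volume 0
  rw [uniformSphereMeasure, ae_map_iff measurable_normalize.aemeasurable
    (measurableSet_eq_fun measurable_norm measurable_const)]
  exact (withDensity_absolutelyContinuous _ _).ae_le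
    (hne.mono fun g hg => NormedSpace.norm_normalize_eq_one_iff.mpr hg)

theorem integral_uniformSphereMeasure {f : E → ℝ} (hf : Measurable f) :
    ∫ g, f g ∂uniformSphereMeasure E =
      (∫ g : E, ‖g‖ * exp (-‖g‖ ^ 2) * f (NormedSpace.normalize g)) /
        ∫ g : E, ‖g‖ * exp (-‖g‖ ^ 2) := by
  rw [uniformSphereMeasure, integral_map measurable_normalize.aemeasurable hf.aestronglyMeasurable,
    integral_withDensity_eq_integral_toReal_smul (by fun_prop)
      (ae_of_all _ fun _ => ENNReal.ofReal_lt_top), ← integral_div]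
  refine integral_congr_ae (ae_of_all _ fun g => ?_)
  have hdensity : 0 ≤ ‖g‖ * exp (-‖g‖ ^ 2) / ∫ h : E, ‖h‖ * exp (-‖h‖ ^ 2) :=
    div_nonneg (by positivity) (integral_nonneg fun h => by positivity)
  simp only [ENNReal.toReal_ofReal hdensity, smul_eq_mul]
  ring

variable {E}

theorem integral_abs_inner_uniformSphereMeasure {x : E} (hx : ‖x‖ = 1) :
    ∫ g, |⟪x, g⟫| ∂uniformSphereMeasure E =
      Gamma (finrank ℝ E / 2) / (√π * Gamma ((finrank ℝ E + 1) / 2)) := by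
  have : Nontrivial E := nontrivial_of_ne x 0 (norm_ne_zero_iff.mp (by simp [hx]))
  have hnorm := integral_norm_pow_mul_exp_neg_norm_sq E 1
  simp only [pow_one, Nat.cast_one] at hnorm
  have hnormalize (g : E) :
      ‖g‖ * exp (-‖g‖ ^ 2) * |⟪x, NormedSpace.normalize g⟫| = |⟪x, g⟫| * exp (-‖g‖ ^ 2) := by
    nth_rewrite 4 [← NormedSpace.norm_smul_normalize g]
    rw [real_inner_smul_right, abs_mul, abs_norm]
    ring
  rw [integral_uniformSphereMeasure E (by fun_prop), hnorm]
  simp only [hnormalize]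
  rw [integral_abs_inner_mul_exp_neg_norm_sq hx,
    ← Nat.sub_add_cancel (Nat.one_le_of_lt (finrank_pos (R := ℝ) (M := E)))]
  rw [Nat.add_sub_cancel, pow_succ]
  field_simp

end Sphere

section Rietz

open MeasureTheory Module
open scoped RealInnerProductSpace

variable {ι : Type*} [Fintype ι] {A : Matrix ι ι ℝ} {M : ℝ}

-- Expand `0 ≤ ∑ i, ∑ j, A i j * (s i - l i) * (s j - l j)`.
theorem sum_mul_add_sub_le_of_forall_sign
    (hpsd : ∀ t : ι → ℝ, 0 ≤ ∑ i, ∑ j, A i j * t i * t j)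
    (hM : ∀ ε : ι → ℝ, (∀ i, ε i = 1 ∨ ε i = -1) → ∑ i, ∑ j, A i j * ε i * ε j ≤ M)
    {s : ι → ℝ} (hs : ∀ i, s i = 1 ∨ s i = -1) (l : ι → ℝ) :
    ∑ i, ∑ j, A i j * (s i * l j + s j * l i - l i * l j) ≤ M := by
  have hsplit : ∑ i, ∑ j, A i j * (s i - l i) * (s j - l j) =
      ∑ i, ∑ j, A i j * s i * s j -
        ∑ i, ∑ j, A i j * (s i * l j + s j * l i - l i * l j) := by
    simp only [← Finset.sum_sub_distrib]
    refine Finset.sum_congr rfl fun i _ => Finset.sum_congr rfl fun j _ => ?_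
    ring
  linarith [hpsd fun i => s i - l i, hM s hs]

theorem sum_mul_le_of_integral_sign_mul_eq {Ω : Type*} [MeasurableSpace Ω] {μ : Measure Ω}
    [IsProbabilityMeasure μ]
    (hpsd : ∀ t : ι → ℝ, 0 ≤ ∑ i, ∑ j, A i j * t i * t j)
    (hM : ∀ ε : ι → ℝ, (∀ i, ε i = 1 ∨ ε i = -1) → ∑ i, ∑ j, A i j * ε i * ε j ≤ M)
    {s l : ι → Ω → ℝ} {G : Matrix ι ι ℝ} (hs : ∀ i ω, s i ω = 1 ∨ s i ω = -1)
    (hs₂ : ∀ i, MemLp (s i) 2 μ) (hl₂ : ∀ i, MemLp (l i) 2 μ)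
    (hsl : ∀ i j, ∫ ω, s i ω * l j ω ∂μ = G i j) (hll : ∀ i j, ∫ ω, l i ω * l j ω ∂μ = G i j) :
    ∑ i, ∑ j, A i j * G i j ≤ M := by
  have hG (i j : ι) : G j i = G i j := by
    rw [← hll, ← hll]
    simp only [mul_comm]
  have hslint (i j : ι) : Integrable (fun ω => s i ω * l j ω) μ := (hs₂ i).integrable_mul (hl₂ j)
  have hllint (i j : ι) : Integrable (fun ω => l i ω * l j ω) μ := (hl₂ i).integrable_mul (hl₂ j)
  have haddint (i j : ι) : Integrable (fun ω => s i ω * l j ω + s j ω * l i ω) μ :=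
    (hslint i j).add (hslint j i)
  have hint (i j : ι) : Integrable
      (fun ω => A i j * (s i ω * l j ω + s j ω * l i ω - l i ω * l j ω)) μ :=
    ((haddint i j).sub (hllint i j)).const_mul _
  have hterm (i j : ι) :
      ∫ ω, A i j * (s i ω * l j ω + s j ω * l i ω - l i ω * l j ω) ∂μ = A i j * G i j := by
    rw [integral_const_mul, integral_sub (haddint i j) (hllint i j),
      integral_add (hslint i j) (hslint j i), hsl, hsl, hll, hG, add_sub_cancel_right]
  calc ∑ i, ∑ j, A i j * G i j
      = ∫ ω, ∑ i, ∑ j, A i j * (s i ω * l j ω + s j ω * l i ω - l i ω * l j ω) ∂μ := by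
        rw [integral_finsetSum _ fun i _ => integrable_finsetSum _ fun j _ => hint i j]
        simp only [integral_finsetSum _ fun j _ => hint _ j, hterm]
    _ ≤ ∫ _, M ∂μ :=
        integral_mono (integrable_finsetSum _ fun i _ => integrable_finsetSum _ fun j _ => hint i j)
          (integrable_const M)
          fun ω => sum_mul_add_sub_le_of_forall_sign hpsd hM (hs · ω) (l · ω)
    _ = M := by rw [integral_const, probReal_univ, one_smul]

/-- The sign of a real number, with the convention that the sign of `0` is `1`, so that every value
is `1` or `-1` (unlike `Real.sign`). -/
noncomputable def unitSign (t : ℝ) : ℝ := if 0 ≤ t then 1 else -1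

theorem unitSign_eq_one_or_neg_one (t : ℝ) : unitSign t = 1 ∨ unitSign t = -1 :=
  ite_eq_or_eq _ _ _

theorem unitSign_mul_self (t : ℝ) : unitSign t * t = |t| := by
  unfold unitSign
  split_ifs with ht
  · rw [one_mul, abs_of_nonneg ht]
  · rw [neg_one_mul, abs_of_neg (not_le.mp ht)]

theorem norm_unitSign (t : ℝ) : ‖unitSign t‖ = 1 := by
  rcases unitSign_eq_one_or_neg_one t with h | h <;> simp [h]

theorem measurable_unitSign : Measurable unitSign :=
  Measurable.ite measurableSet_Ici measurable_const measurable_const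

variable {E : Type*} [NormedAddCommGroup E] [InnerProductSpace ℝ E] [FiniteDimensional ℝ E]
  [MeasurableSpace E] [BorelSpace E] {μ : Measure E}

theorem RotationInvariant.integral_unitSign_inner_mul_inner (hμ : RotationInvariant μ)
    (hμ₁ : Integrable (fun g : E => g) μ) {x : E} (hx : ‖x‖ = 1) (y : E) :
    ∫ g, unitSign ⟪x, g⟫ * ⟪y, g⟫ ∂μ = (∫ g, |⟪x, g⟫| ∂μ) * ⟪x, y⟫ := by
  have hint : Integrable (fun g => unitSign ⟪x, g⟫ • g) μ :=
    hμ₁.bdd_smul 1 (measurable_unitSign.comp (by fun_prop)).aestronglyMeasurable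
      (ae_of_all _ fun g => (norm_unitSign _).le)
  rw [hμ.integral_comp_inner_mul_inner hx hint]
  simp only [unitSign_mul_self]

theorem RotationInvariant.finrank_mul_sq_mul_sum_mul_inner_le [IsProbabilityMeasure μ]
    (hμ : RotationInvariant μ) (hsphere : ∀ᵐ g ∂μ, ‖g‖ = 1)
    (hpsd : ∀ t : ι → ℝ, 0 ≤ ∑ i, ∑ j, A i j * t i * t j)
    (hM : ∀ ε : ι → ℝ, (∀ i, ε i = 1 ∨ ε i = -1) → ∑ i, ∑ j, A i j * ε i * ε j ≤ M)
    {x : ι → E} (hx : ∀ i, ‖x i‖ = 1) {e : E} (he : ‖e‖ = 1) :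
    finrank ℝ E * (∫ g, |⟪e, g⟫| ∂μ) ^ 2 * ∑ i, ∑ j, A i j * ⟪x i, x j⟫ ≤ M := by
  set m : ℝ := (finrank ℝ E : ℝ)
  set J := ∫ g, |⟪e, g⟫| ∂μ
  have hμ₂ : MemLp (fun g : E => g) 2 μ :=
    MemLp.of_bound measurable_id.aestronglyMeasurable 1 (hsphere.mono fun g hg => hg.le)
  have hnorm : ∫ g, ‖g‖ ^ 2 ∂μ = 1 := by
    have hone : (fun g : E => ‖g‖ ^ 2) =ᵐ[μ] 1 := hsphere.mono fun g hg => by simp [hg]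
    simp [integral_congr_ae hone]
  have habs (i : ι) : ∫ g, |⟪x i, g⟫| ∂μ = J :=
    hμ.integral_comp_inner_norm_eq_of_norm_eq ((hx i).trans he.symm) fun t _ => |t|
  have hsign (i j : ι) :
      ∫ g, unitSign ⟪x i, g⟫ * (m * J * ⟪x j, g⟫) ∂μ = m * J ^ 2 * ⟪x i, x j⟫ := by
    simp only [mul_left_comm _ (m * J), integral_const_mul]
    rw [hμ.integral_unitSign_inner_mul_inner (hμ₂.integrable one_le_two) (hx i), habs]
    ring
  have hlin (i j : ι) :
      ∫ g, m * J * ⟪x i, g⟫ * (m * J * ⟪x j, g⟫) ∂μ = m * J ^ 2 * ⟪x i, x j⟫ := by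
    simp only [mul_mul_mul_comm _ _ (m * J), integral_const_mul]
    linear_combination m * J ^ 2 * (hμ.finrank_mul_integral_inner_mul_inner hμ₂ (hx i) (x j)) +
      m * J ^ 2 * ⟪x i, x j⟫ * hnorm
  have hbound := sum_mul_le_of_integral_sign_mul_eq (μ := μ) hpsd hM
    (s := fun i g => unitSign ⟪x i, g⟫) (l := fun i g => m * J * ⟪x i, g⟫)
    (fun _ _ => unitSign_eq_one_or_neg_one _)
    (fun i => MemLp.of_bound (measurable_unitSign.comp (by fun_prop)).aestronglyMeasurable 1
      (ae_of_all _ fun g => (norm_unitSign _).le))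
    (fun i => (hμ₂.const_inner (x i)).const_mul (m * J)) hsign hlin
  simpa only [Finset.mul_sum, mul_left_comm _ (A _ _)] using hbound

omit [MeasurableSpace E] [BorelSpace E] in
theorem sum_mul_inner_le_finrank [Nontrivial E]
    (hpsd : ∀ t : ι → ℝ, 0 ≤ ∑ i, ∑ j, A i j * t i * t j)
    (hM : ∀ ε : ι → ℝ, (∀ i, ε i = 1 ∨ ε i = -1) → ∑ i, ∑ j, A i j * ε i * ε j ≤ M)
    {x : ι → E} (hx : ∀ i, ‖x i‖ = 1) :
    ∑ i, ∑ j, A i j * ⟪x i, x j⟫ ≤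
      π / finrank ℝ E * (Gamma ((finrank ℝ E + 1) / 2) / Gamma (finrank ℝ E / 2)) ^ 2 * M := by
  borelize E
  obtain ⟨e, he⟩ := exists_norm_eq E zero_le_one
  have hfinrank : 0 < finrank ℝ E := finrank_pos
  have : 0 < Gamma ((finrank ℝ E : ℝ) / 2) := Gamma_pos_of_pos (by positivity)
  have : 0 < Gamma ((finrank ℝ E + 1 : ℝ) / 2) := Gamma_pos_of_pos (by positivity)
  have hbound := (rotationInvariant_uniformSphereMeasure E).finrank_mul_sq_mul_sum_mul_inner_le
    (norm_eq_one_ae_uniformSphereMeasure E) hpsd hM hx he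
  rw [integral_abs_inner_uniformSphereMeasure he, mul_comm, ← le_div_iff₀ (by positivity)] at hbound
  refine hbound.trans_eq ?_
  simp only [div_pow, mul_pow, sq_sqrt pi_pos.le]
  field_simp

end Rietz

section Gram

open scoped RealInnerProductSpace

variable {ι : Type*} [Fintype ι]

open scoped MatrixOrder Matrix.Norms.L2Operator in
theorem exists_inner_eq_of_posSemidef {G : Matrix ι ι ℝ} (hG : G.PosSemidef) :
    ∃ y : ι → EuclideanSpace ℝ ι, ∀ i j, ⟪y i, y j⟫ = G i j := by
  classical
  obtain ⟨B, rfl⟩ := CStarAlgebra.nonneg_iff_eq_star_mul_self.mp hG.nonneg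
  refine ⟨fun i => WithLp.toLp 2 (B.col i), fun i j => ?_⟩
  simp [Matrix.mul_apply, PiLp.inner_apply, Matrix.star_eq_conjTranspose, mul_comm]

-- Adding `1 - ‖x i‖ ^ 2` on the diagonal keeps the Gram matrix positive semidefinite.
theorem exists_norm_eq_one_sum_mul_inner_le {E : Type*} [NormedAddCommGroup E]
    [InnerProductSpace ℝ E] {A : Matrix ι ι ℝ} (hA : ∀ i, 0 ≤ A i i) {x : ι → E}
    (hx : ∀ i, ‖x i‖ ≤ 1) :
    ∃ y : ι → EuclideanSpace ℝ ι, (∀ i, ‖y i‖ = 1) ∧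
      ∑ i, ∑ j, A i j * ⟪x i, x j⟫ ≤ ∑ i, ∑ j, A i j * ⟪y i, y j⟫ := by
  classical
  have hdefect (i : ι) : 0 ≤ 1 - ‖x i‖ ^ 2 :=
    sub_nonneg.mpr (pow_le_one₀ (norm_nonneg _) (hx i))
  obtain ⟨y, hy⟩ := exists_inner_eq_of_posSemidef
    ((Matrix.posSemidef_gram ℝ x).add (Matrix.PosSemidef.diagonal hdefect))
  simp only [Matrix.add_apply, Matrix.gram_apply, Matrix.diagonal_apply] at hy
  refine ⟨y, fun i => ?_, ?_⟩
  · rw [norm_eq_sqrt_real_inner, hy, if_pos rfl, real_inner_self_eq_norm_sq, add_sub_cancel,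
      sqrt_one]
  · refine Finset.sum_le_sum fun i _ => Finset.sum_le_sum fun j _ => ?_
    rw [hy]
    split_ifs with hij
    · subst hij
      exact mul_le_mul_of_nonneg_left (le_add_of_nonneg_right (hdefect i)) (hA i)
    · rw [add_zero]

end Gram

theorem bddAbove_sum_mul_sign {ι : Type*} [Fintype ι] (A : Matrix ι ι ℝ) :
    BddAbove {s : ℝ | ∃ ε : ι → ℝ, (∀ i, ε i = 1 ∨ ε i = -1) ∧
      s = ∑ i, ∑ j, A i j * ε i * ε j} := by
  have hsigns : {ε : ι → ℝ | ∀ i, ε i = 1 ∨ ε i = -1}.Finite :=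
    Set.Finite.pi' fun _ => Set.toFinite {1, -1}
  refine ((hsigns.image fun ε => ∑ i, ∑ j, A i j * ε i * ε j).subset ?_).bddAbove
  rintro s ⟨ε, hε, rfl⟩
  exact ⟨ε, hε, rfl⟩

theorem diag_nonneg_of_forall_sum_mul_nonneg {ι : Type*} [Fintype ι] {A : Matrix ι ι ℝ}
    (hpsd : ∀ t : ι → ℝ, 0 ≤ ∑ i, ∑ j, A i j * t i * t j) (i : ι) : 0 ≤ A i i := by
  classical
  simpa [Pi.single_apply] using hpsd (Pi.single i 1)

theorem psd_grothendieck_inequality_dimension_improvement_general {ι E : Type*} [Fintype ι]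
    [NormedAddCommGroup E] [InnerProductSpace ℝ E] (A : Matrix ι ι ℝ)
    (hpsd : ∀ t : ι → ℝ, 0 ≤ ∑ i, ∑ j, A i j * t i * t j)
    (x : ι → E) (hx : ∀ i, ‖x i‖ ≤ 1) :
    ∑ i, ∑ j, A i j * (inner ℝ (x i) (x j) : ℝ) ≤
      (π / Fintype.card ι) *
        (Gamma (((Fintype.card ι : ℝ) + 1) / 2) / Gamma ((Fintype.card ι : ℝ) / 2)) ^ 2 *
        sSup {s : ℝ | ∃ ε : ι → ℝ, (∀ i, ε i = 1 ∨ ε i = -1) ∧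
          s = ∑ i, ∑ j, A i j * ε i * ε j} := by
  rcases isEmpty_or_nonempty ι with hι | hι
  · simp
  obtain ⟨y, hy, hxy⟩ :=
    exists_norm_eq_one_sum_mul_inner_le (diag_nonneg_of_forall_sum_mul_nonneg hpsd) hx
  have hle := sum_mul_inner_le_finrank hpsd
    (fun ε hε => le_csSup (bddAbove_sum_mul_sign A) ⟨ε, hε, rfl⟩) hy
  rw [finrank_euclideanSpace] at hle
  exact hxy.trans hle

/-- The dimension-improved positive semidefinite Grothendieck inequality: for every
symmetric positive semidefinite `n × n` real matrix `A` and all unit vectors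
`x₁, …, xₙ ∈ ℝ^d`, the vector quadratic form is at most
`(π/n)(Γ((n+1)/2)/Γ(n/2))²` times the maximum over signs of the quadratic form. -/
theorem psd_grothendieck_inequality_dimension_improvement {n : ℕ}
    (A : Matrix (Fin n) (Fin n) ℝ)
    (hsymm : ∀ i j, A i j = A j i)
    (hpsd : ∀ t : Fin n → ℝ, 0 ≤ ∑ i, ∑ j, A i j * t i * t j)
    (d : ℕ) (x : Fin n → EuclideanSpace ℝ (Fin d)) (hx : ∀ i, ‖x i‖ = 1) :
    ∑ i, ∑ j, A i j * (inner ℝ (x i) (x j) : ℝ) ≤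
      (π / n) * (Real.Gamma (((n : ℝ) + 1) / 2) / Real.Gamma ((n : ℝ) / 2)) ^ 2 *
        sSup {s : ℝ | ∃ ε : Fin n → ℝ, (∀ i, ε i = 1 ∨ ε i = -1) ∧
          s = ∑ i, ∑ j, A i j * ε i * ε j} := by
  simpa only [Fintype.card_fin] using
    psd_grothendieck_inequality_dimension_improvement_general A hpsd x fun i => (hx i).le
end
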